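/- Let m ≥ 3 be a prime, n = 2^m − 1, and h = (2^{m−1} − 1)/m (an integer by Fermat's little theorem). For a ∈ {1, …, n − 1}, the 2-cyclotomic coset of a modulo n is {a·2^i mod n : i ≥ 0}, and its coset leader is its least element; let δ_1 < δ_2 < ⋯ be the distinct coset leaders of the nonzero 2-cyclotomic cosets modulo n, listed in increasing order. Let β be a primitive element of F_{2^m} and let g(x) = lcm(m_β(x), m_{β^2}(x), …, m_{β^{δ_h + 1}}(x)), the generator polynomial of the BCH code C_{(2,n,δ_h+2,1)}. Then the cyclic code of length 2n over F_2 with generator polynomial (x−1)·g(x)^2 has dimension n and minimum distance d satisfying d ≥ δ_h + 3 ≥ (n − 1 + 2m)/m. -/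

import Mathlib

open Polynomial

/-- The cyclic code of length `N` over the field `F` generated by the polynomial `g`.
Codewords are identified with the representatives of degree `< N` of the elements of the
ideal generated by `g` in `F[x]/(x^N - 1)`; equivalently, a polynomial `c` of degree `< N`
is a codeword iff `c ∈ (g, x^N - 1)` as an ideal of `F[x]`. -/
noncomputable def cyclicCode (F : Type*) [Field F] (N : ℕ) (g : Polynomial F) :
    Submodule F (Polynomial F) :=
  Polynomial.degreeLT F N ⊓
    Submodule.restrictScalars F (Ideal.span ({g, Polynomial.X ^ N - 1} : Set (Polynomial F)))

/-- The minimum distance (equivalently, the minimum Hamming weight of a nonzero codeword,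
a codeword being identified with its coefficient vector) of a linear code of polynomials. -/
noncomputable def minDist {F : Type*} [Field F] (C : Submodule F (Polynomial F)) : ℕ :=
  sInf {w | ∃ c ∈ C, c ≠ 0 ∧ c.support.card = w}

/-- The set of coset leaders of the nonzero `2`-cyclotomic cosets modulo `n`:
`a ∈ {1, …, n-1}` is a coset leader iff it is the least element of its coset
`{a·2^i mod n : i ≥ 0}`. -/
def cosetLeaders (n : ℕ) : Set ℕ :=
  {a | 0 < a ∧ a < n ∧ ∀ i : ℕ, a ≤ a * 2 ^ i % n}

/-- `δ` is the `h`-th smallest coset leader (i.e. `δ = δ_h` where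
`δ_1 < δ_2 < ⋯` lists the coset leaders in increasing order). -/
def IsNthSmallestLeader (n h δ : ℕ) : Prop :=
  δ ∈ cosetLeaders n ∧ {a ∈ cosetLeaders n | a ≤ δ}.ncard = h

/-!
Since `g ^ q = g(x ^ q)` over `F_q`, the `q` decimations of a multiple of `(x - 1) * g ^ q` are
multiples of `g`, and their values at `1` add up to `0`. If two of them are nonzero, the BCH bound
for the roots `β, …, β ^ d` of `g` applies to both, giving weight at least `2 * (d + 1)`. If only
one is nonzero, it vanishes at `1` as well, and the BCH bound for the roots `1, β, …, β ^ d` gives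
`d + 2`.

In the binary case with `d = δ_h + 1`, each coset leader up to `d` contributes to `g` one
irreducible factor, of degree `m` because `m` is prime. Coset leaders are odd, so there are `h` of
them up to `d` and `δ_h ≥ 2 * h - 1`; hence `deg g = m * h` and `n = 2 * m * h + 1`.
-/

section Decimation

variable {R : Type*} [CommSemiring R]

/-- The `i`-th decimation of `f` modulo `p`, with coefficients `f_i, f_{p + i}, f_{2p + i}, …`. For
`i < p` these cut a word of length `p * n` into `p` interleaved words of length `n`. -/
noncomputable def decimate (p i : ℕ) (f : R[X]) : R[X] :=
  contract p (divX^[i] f)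

theorem coeff_iterate_divX (f : R[X]) (i k : ℕ) : (divX^[i] f).coeff k = f.coeff (k + i) := by
  induction i generalizing k with
  | zero => rfl
  | succ i ih => rw [Function.iterate_succ_apply', coeff_divX, ih, add_right_comm, add_assoc]

variable {p : ℕ} [NeZero p]

theorem coeff_decimate (i : ℕ) (f : R[X]) (k : ℕ) :
    (decimate p i f).coeff k = f.coeff (p * k + i) := by
  rw [decimate, coeff_contract (NeZero.ne p), coeff_iterate_divX, mul_comm]

theorem degree_decimate_lt {n : ℕ} {f : R[X]} (hf : f.degree < (p * n : ℕ)) (i : ℕ) :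
    (decimate p i f).degree < n := by
  rw [degree_lt_iff_coeff_zero] at hf ⊢
  intro k hk
  rw [coeff_decimate]
  exact hf _ (Nat.le_add_right_of_le (Nat.mul_le_mul_left p hk))

theorem decimate_add (i : ℕ) (f g : R[X]) :
    decimate p i (f + g) = decimate p i f + decimate p i g := by
  ext k
  simp only [coeff_decimate, coeff_add]

theorem decimate_expand_mul {i : ℕ} (hi : i < p) (g f : R[X]) :
    decimate p i (expand R p g * f) = g * decimate p i f := by
  induction g using Polynomial.induction_on' with
  | add g₁ g₂ h₁ h₂ => rw [map_add, add_mul, decimate_add, h₁, h₂, add_mul]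
  | monomial l a =>
    ext k
    have mul_le_iff : l * p ≤ p * k + i ↔ l ≤ k := by
      rw [← Nat.le_div_iff_mul_le (NeZero.pos p), Nat.mul_add_div (NeZero.pos p),
        Nat.div_eq_of_lt hi, add_zero]
    rw [coeff_decimate, expand_monomial, ← C_mul_X_pow_eq_monomial, ← C_mul_X_pow_eq_monomial,
      mul_assoc, mul_assoc, coeff_C_mul, coeff_C_mul, coeff_X_pow_mul', coeff_X_pow_mul']
    simp only [mul_le_iff]
    split_ifs with hlk
    · obtain ⟨r, rfl⟩ := Nat.exists_eq_add_of_le hlk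
      rw [coeff_decimate, Nat.add_sub_cancel_left,
        show p * (l + r) + i = l * p + (p * r + i) by ring, Nat.add_sub_cancel_left]
    · rfl

theorem sum_X_pow_mul_expand_decimate (f : R[X]) :
    ∑ i ∈ Finset.range p, X ^ i * expand R p (decimate p i f) = f := by
  ext k
  have hp : 0 < p := NeZero.pos p
  rw [finsetSum_coeff, Finset.sum_eq_single (k % p)]
  · rw [coeff_X_pow_mul', if_pos (Nat.mod_le k p), coeff_expand hp,
      if_pos (Nat.dvd_sub_mod k), coeff_decimate, Nat.mul_div_cancel' (Nat.dvd_sub_mod k),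
      Nat.sub_add_cancel (Nat.mod_le k p)]
  · intro i hi hik
    rw [coeff_X_pow_mul', coeff_expand hp]
    split_ifs with hle hdvd
    · refine absurd ?_ hik
      rw [← Nat.mod_eq_of_lt (Finset.mem_range.mp hi)]
      exact (Nat.modEq_iff_dvd' hle).mpr hdvd
    · rfl
    · rfl
  · exact fun h ↦ absurd (Finset.mem_range.mpr (Nat.mod_lt k hp)) h

theorem eval_one_eq_sum_decimate (f : R[X]) :
    f.eval 1 = ∑ i ∈ Finset.range p, (decimate p i f).eval 1 := by
  conv_lhs => rw [← sum_X_pow_mul_expand_decimate (p := p) f]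
  simp [eval_finsetSum, expand_eval]

theorem card_support_eq_sum_decimate (f : R[X]) :
    f.support.card = ∑ i ∈ Finset.range p, (decimate p i f).support.card := by
  rw [Finset.card_eq_sum_card_fiberwise (f := (· % p)) (t := Finset.range p)
    fun k _ ↦ Finset.mem_coe.mpr (Finset.mem_range.mpr (Nat.mod_lt k (NeZero.pos p)))]
  refine Finset.sum_congr rfl fun i hi ↦ ?_
  have hi : i < p := Finset.mem_range.mp hi
  refine Finset.card_nbij' (· / p) (p * · + i) ?_ ?_ ?_ ?_
  · intro k hk
    obtain ⟨hk_mem, rfl⟩ := Finset.mem_filter.mp hk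
    simpa [coeff_decimate, Nat.div_add_mod] using hk_mem
  · intro k hk
    simpa [coeff_decimate, Nat.mod_eq_of_lt hi] using hk
  · intro k hk
    obtain ⟨-, rfl⟩ := Finset.mem_filter.mp hk
    exact Nat.div_add_mod k p
  · intro k _
    simp [Nat.mul_add_div (NeZero.pos p), Nat.div_eq_of_lt hi]

end Decimation

section BCHBound

theorem eq_zero_of_forall_sum_mul_pow_eq_zero {ι R : Type*} [CommRing R] [IsDomain R]
    {s : Finset ι} {f v : ι → R} (hf : Set.InjOn f s)
    (hv : ∀ j < s.card, ∑ i ∈ s, v i * f i ^ j = 0) : ∀ i ∈ s, v i = 0 := by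
  have hzero := Matrix.eq_zero_of_forall_pow_sum_mul_pow_eq_zero
    (f := fun k ↦ f (s.equivFin.symm k)) (v := fun k ↦ v (s.equivFin.symm k))
    (hf.injective.comp s.equivFin.symm.injective) fun j ↦
      (s.equivFin.symm.sum_comp fun i ↦ v i * f i ^ (j : ℕ)).trans <|
        (s.sum_coe_sort fun i ↦ v i * f i ^ (j : ℕ)).trans (hv j j.isLt)
  intro i hi
  simpa using congrFun hzero (s.equivFin ⟨i, hi⟩)

variable {F K : Type*} [Field F] [Field K] [Algebra F K] {n : ℕ} {β : K}

theorem aeval_pow_add_eq_sum (c : F[X]) (b j : ℕ) (β : K) :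
    aeval (β ^ (b + j)) c =
      ∑ i ∈ c.support, algebraMap F K (c.coeff i) * β ^ (b * i) * (β ^ i) ^ j := by
  rw [aeval_def, eval₂_eq_sum, Polynomial.sum]
  refine Finset.sum_congr rfl fun i _ ↦ ?_
  ring

theorem bch_bound (hβ : IsPrimitiveRoot β n) {c : F[X]} (hc : c ≠ 0) (hdeg : c.degree < n)
    {b d : ℕ} (hroots : ∀ j ∈ Finset.Ico b (b + d), aeval (β ^ j) c = 0) :
    d < c.support.card := by
  by_contra! hcard
  have lt_of_mem_support : ∀ i ∈ c.support, i < n := fun i hi ↦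
    by_contra fun hin ↦ mem_support_iff.mp hi
      ((degree_lt_iff_coeff_zero c n).mp hdeg i (not_lt.mp hin))
  have hinj : Set.InjOn (β ^ ·) c.support := fun i hi j hj hij ↦
    hβ.pow_inj (lt_of_mem_support i hi) (lt_of_mem_support j hj) hij
  have hzero := eq_zero_of_forall_sum_mul_pow_eq_zero hinj fun j hj ↦
    (aeval_pow_add_eq_sum c b j β).symm.trans (hroots _ (Finset.mem_Ico.mpr (by omega)))
  obtain ⟨i, hi⟩ := nonempty_support_iff.mpr hc
  have hβ0 : β ≠ 0 := hβ.ne_zero (Nat.ne_zero_of_lt (lt_of_mem_support i hi))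
  have hcoeff : algebraMap F K (c.coeff i) ≠ 0 := (_root_.map_ne_zero _).mpr (mem_support_iff.mp hi)
  exact mul_ne_zero hcoeff (pow_ne_zero _ hβ0) (hzero i hi)

theorem add_two_le_card_support (hβ : IsPrimitiveRoot β n) {c : F[X]} (hc : c ≠ 0)
    (hdeg : c.degree < n) {d : ℕ} (hroots : ∀ j ∈ Finset.Icc 1 d, aeval (β ^ j) c = 0)
    (hone : c.eval 1 = 0) : d + 2 ≤ c.support.card := by
  refine bch_bound (d := d + 1) (b := 0) hβ hc hdeg fun j hj ↦ ?_
  rcases j.eq_zero_or_pos with rfl | hj0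
  · rw [pow_zero, ← map_one (algebraMap F K), aeval_algebraMap_apply_eq_algebraMap_eval, hone,
      map_zero]
  · exact hroots j (Finset.mem_Icc.mpr ⟨hj0, by simp at hj; omega⟩)

theorem add_two_le_card_support_of_expand_dvd {p : ℕ} [NeZero p] (hβ : IsPrimitiveRoot β n)
    {d : ℕ} {g : F[X]} (hg : ∀ j ∈ Finset.Icc 1 d, aeval (β ^ j) g = 0)
    {c : F[X]} (hc : c ≠ 0) (hdeg : c.degree < (p * n : ℕ)) (hdvd : (X - 1) * expand F p g ∣ c) :
    d + 2 ≤ c.support.card := by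
  obtain ⟨q, rfl⟩ := hdvd
  set c := (X - 1) * expand F p g * q with hc_def
  have hroots : ∀ i ∈ Finset.range p, ∀ j ∈ Finset.Icc 1 d,
      aeval (β ^ j) (decimate p i c) = 0 := fun i hi j hj ↦ by
    rw [show c = expand F p g * ((X - 1) * q) by rw [hc_def]; ring,
      decimate_expand_mul (Finset.mem_range.mp hi), map_mul, hg j hj, zero_mul]
  have hsum : ∑ i ∈ Finset.range p, (decimate p i c).eval 1 = 0 := by
    rw [← eval_one_eq_sum_decimate]
    simp [hc_def]
  obtain ⟨i, hi, hi0⟩ : ∃ i ∈ Finset.range p, decimate p i c ≠ 0 := by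
    by_contra! hzero
    refine hc ?_
    rw [← sum_X_pow_mul_expand_decimate (p := p) c]
    exact Finset.sum_eq_zero fun i hi ↦ by rw [hzero i hi, map_zero, mul_zero]
  rw [card_support_eq_sum_decimate (p := p) c]
  by_cases! hother : ∃ j ∈ Finset.range p, j ≠ i ∧ decimate p j c ≠ 0
  · obtain ⟨j, hj, hji, hj0⟩ := hother
    have weight_gt : ∀ k ∈ Finset.range p, decimate p k c ≠ 0 →
        d < (decimate p k c).support.card := fun k hk hk0 ↦
      bch_bound (b := 1) hβ hk0 (degree_decimate_lt hdeg k) fun l hl ↦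
        hroots k hk l (by simp only [Finset.mem_Ico, Finset.mem_Icc] at hl ⊢; omega)
    have weight_pair_le := Finset.add_le_sum (f := fun k ↦ (decimate p k c).support.card)
      (fun _ _ ↦ Nat.zero_le _) hi hj hji.symm
    have := weight_gt i hi hi0
    have := weight_gt j hj hj0
    omega
  · have hone : (decimate p i c).eval 1 = 0 := by
      rwa [Finset.sum_eq_single_of_mem i hi fun j hj hji ↦ by
        rw [hother j hj hji, eval_zero]] at hsum
    exact (add_two_le_card_support hβ hi0 (degree_decimate_lt hdeg i) (hroots i hi) hone).trans
      (Finset.single_le_sum (f := fun k ↦ (decimate p k c).support.card)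
        (fun _ _ ↦ Nat.zero_le _) hi)

end BCHBound

section CyclicCode

variable {F : Type*} [Field F] {n N : ℕ} {g : F[X]}

theorem mem_cyclicCode_iff (hg : g ∣ X ^ N - 1) {c : F[X]} :
    c ∈ cyclicCode F N g ↔ c.degree < N ∧ g ∣ c := by
  rw [cyclicCode, Submodule.mem_inf, mem_degreeLT, Submodule.restrictScalars_mem,
    Ideal.span_pair_eq_span_left_iff_dvd.mpr hg, Ideal.mem_span_singleton]

theorem finrank_cyclicCode_add_natDegree (hN : N ≠ 0) (hg : g ∣ X ^ N - 1) :
    Module.finrank F (cyclicCode F N g) + g.natDegree = N := by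
  have hX : (X ^ N - 1 : F[X]) ≠ 0 := X_pow_sub_C_ne_zero (Nat.pos_of_ne_zero hN) 1
  have hg0 : g ≠ 0 := ne_zero_of_dvd_ne_zero hX hg
  obtain ⟨k, hk⟩ : ∃ k, N = g.natDegree + k := Nat.exists_eq_add_of_le <|
    (natDegree_le_of_dvd hg hX).trans_eq (natDegree_X_pow_sub_C (r := (1 : F)))
  have degree_mul_lt_iff (q : F[X]) : (g * q).degree < N ↔ q.degree < k := by
    rcases eq_or_ne q 0 with rfl | hq
    · simp
    · rw [← natDegree_lt_iff_degree_lt hq, ← natDegree_lt_iff_degree_lt (mul_ne_zero hg0 hq),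
        natDegree_mul hg0 hq, hk, Nat.add_lt_add_iff_left]
  have hmap : cyclicCode F N g = (degreeLT F k).map (LinearMap.mulLeft F g) := by
    ext c
    rw [mem_cyclicCode_iff hg, Submodule.mem_map]
    constructor
    · rintro ⟨hdeg, q, rfl⟩
      exact ⟨q, mem_degreeLT.mpr ((degree_mul_lt_iff q).mp hdeg), rfl⟩
    · rintro ⟨q, hq, rfl⟩
      exact ⟨(degree_mul_lt_iff q).mpr (mem_degreeLT.mp hq), dvd_mul_right g q⟩
  rw [hmap, ← (Submodule.equivMapOfInjective _ (mul_right_injective₀ hg0) _).finrank_eq,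
    (degreeLTEquiv F k).finrank_eq, Module.finrank_fin_fun, hk, add_comm]

theorem le_minDist {C : Submodule F F[X]} {d : ℕ} (hC : C ≠ ⊥)
    (hd : ∀ c ∈ C, c ≠ 0 → d ≤ c.support.card) : d ≤ minDist C := by
  obtain ⟨c, hc, hc0⟩ := Submodule.exists_mem_ne_zero_of_ne_bot hC
  refine le_csInf ⟨_, c, hc, hc0, rfl⟩ ?_
  rintro _ ⟨c, hc, hc0, rfl⟩
  exact hd c hc hc0

theorem natDegree_X_sub_one_mul (hg : g ≠ 0) :
    ((X - 1) * g).natDegree = 1 + g.natDegree := by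
  rw [← C_1, natDegree_mul (X_sub_C_ne_zero 1) hg, natDegree_X_sub_C]

variable [Fintype F]

local notation "q" => Fintype.card F

theorem X_sub_one_mul_pow_card_dvd (hg : (X - 1) * g ∣ X ^ n - 1) :
    (X - 1) * g ^ q ∣ X ^ (q * n) - 1 := by
  have hpow : (X ^ n - 1 : F[X]) ^ q = X ^ (q * n) - 1 := by
    rw [← FiniteField.expand_card]
    simp [pow_mul]
  calc (X - 1) * g ^ q ∣ (X - 1) ^ q * g ^ q :=
        mul_dvd_mul_right (dvd_pow_self _ Fintype.card_ne_zero) _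
    _ = ((X - 1) * g) ^ q := (mul_pow _ _ _).symm
    _ ∣ (X ^ n - 1) ^ q := pow_dvd_pow_of_dvd hg q
    _ = X ^ (q * n) - 1 := hpow

theorem finrank_cyclicCode_X_sub_one_mul_pow_card (hn : n ≠ 0) (hg : (X - 1) * g ∣ X ^ n - 1) :
    Module.finrank F (cyclicCode F (q * n) ((X - 1) * g ^ q)) + (1 + q * g.natDegree) = q * n := by
  have hX : (X ^ n - 1 : F[X]) ≠ 0 := X_pow_sub_C_ne_zero (Nat.pos_of_ne_zero hn) 1
  have hg0 : g ≠ 0 := right_ne_zero_of_mul (ne_zero_of_dvd_ne_zero hX hg)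
  rw [← natDegree_pow, ← natDegree_X_sub_one_mul (pow_ne_zero q hg0)]
  exact finrank_cyclicCode_add_natDegree (mul_ne_zero Fintype.card_ne_zero hn)
    (X_sub_one_mul_pow_card_dvd hg)

theorem cyclicCode_X_sub_one_mul_pow_card_ne_bot (hn : n ≠ 0) (hg : (X - 1) * g ∣ X ^ n - 1) :
    cyclicCode F (q * n) ((X - 1) * g ^ q) ≠ ⊥ := by
  intro hbot
  have hX : (X ^ n - 1 : F[X]) ≠ 0 := X_pow_sub_C_ne_zero (Nat.pos_of_ne_zero hn) 1
  have hdeg : 1 + g.natDegree ≤ n := by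
    rw [← natDegree_X_sub_one_mul (right_ne_zero_of_mul (ne_zero_of_dvd_ne_zero hX hg))]
    exact (natDegree_le_of_dvd hg hX).trans_eq (natDegree_X_pow_sub_C (r := (1 : F)))
  have hrank := finrank_cyclicCode_X_sub_one_mul_pow_card hn hg
  have hq : 1 < q := Fintype.one_lt_card
  rw [hbot, finrank_bot] at hrank
  nlinarith

theorem add_two_le_minDist_cyclicCode {K : Type*} [Field K] [Algebra F K] {β : K} (hn : n ≠ 0)
    (hβ : IsPrimitiveRoot β n) {d : ℕ} (hroots : ∀ j ∈ Finset.Icc 1 d, aeval (β ^ j) g = 0)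
    (hg : (X - 1) * g ∣ X ^ n - 1) :
    d + 2 ≤ minDist (cyclicCode F (q * n) ((X - 1) * g ^ q)) := by
  refine le_minDist (cyclicCode_X_sub_one_mul_pow_card_ne_bot hn hg) fun c hc hc0 ↦ ?_
  obtain ⟨hdeg, hdvd⟩ := (mem_cyclicCode_iff (X_sub_one_mul_pow_card_dvd hg)).mp hc
  rw [← FiniteField.expand_card] at hdvd
  exact add_two_le_card_support_of_expand_dvd hβ hroots hc0 hdeg hdvd

end CyclicCode

section CosetLeaders

variable {n : ℕ}

theorem odd_of_mem_cosetLeaders (hn : Odd n) {a : ℕ} (ha : a ∈ cosetLeaders n) : Odd a := by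
  obtain ⟨ha0, han, hmin⟩ := ha
  by_contra hodd
  -- As `2` is invertible modulo `n`, the coset of `2 * b` contains the smaller element `b`.
  obtain ⟨b, rfl⟩ := even_iff_two_dvd.mp (Nat.not_odd_iff_even.mp hodd)
  have hφ : n.totient - 1 + 1 = n.totient := Nat.sub_add_cancel (Nat.totient_pos.mpr hn.pos)
  have hmod : 2 * b * 2 ^ (n.totient - 1) ≡ b [MOD n] := by
    have := (Nat.ModEq.pow_totient (Nat.coprime_two_left.mpr hn)).mul_left b
    rwa [mul_one, ← hφ, pow_succ', mul_left_comm, ← mul_assoc] at this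
  have hle := hmin (n.totient - 1)
  rw [hmod, Nat.mod_eq_of_lt (by omega)] at hle
  omega

theorem add_one_lt_of_mem_cosetLeaders (hn : Odd n) {a : ℕ} (ha : a ∈ cosetLeaders n) :
    a + 1 < n := by
  obtain ⟨k, rfl⟩ := hn
  obtain ⟨l, rfl⟩ := odd_of_mem_cosetLeaders ⟨k, rfl⟩ ha
  have := ha.2.1
  omega

theorem exists_mem_cosetLeaders_eq_mul_two_pow_mod (hn : Odd n) {j : ℕ} (hj0 : 0 < j)
    (hjn : j < n) : ∃ a ∈ cosetLeaders n, a ≤ j ∧ ∃ i, a = j * 2 ^ i % n := by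
  classical
  have hcoset : ∃ a, ∃ i, a = j * 2 ^ i % n := ⟨_, 0, rfl⟩
  obtain ⟨i, hi⟩ := Nat.find_spec hcoset
  have hmin : ∀ k, Nat.find hcoset ≤ j * 2 ^ k % n := fun k ↦ Nat.find_min' hcoset ⟨k, rfl⟩
  refine ⟨Nat.find hcoset, ⟨?_, ?_, fun k ↦ ?_⟩, ?_, i, hi⟩
  · rw [hi, Nat.pos_iff_ne_zero]
    intro hzero
    have hcop : n.Coprime (2 ^ i) := (Nat.coprime_two_right.mpr hn).pow_right i
    exact Nat.not_dvd_of_pos_of_lt hj0 hjn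
      (hcop.dvd_of_dvd_mul_right (Nat.dvd_of_mod_eq_zero hzero))
  · rw [hi]
    exact Nat.mod_lt _ hn.pos
  · conv_rhs => rw [hi, Nat.mod_mul_mod, mul_assoc, ← pow_add]
    exact hmin (i + k)
  · simpa [Nat.mod_eq_of_lt hjn] using hmin 0

theorem IsNthSmallestLeader.ncard_le_add_one (hn : Odd n) {h δ : ℕ}
    (hδ : IsNthSmallestLeader n h δ) : {a ∈ cosetLeaders n | a ≤ δ + 1}.ncard = h := by
  rw [← hδ.2]
  congr 1
  ext a
  refine and_congr_right fun ha ↦ ?_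
  have ha_odd := odd_of_mem_cosetLeaders hn ha
  have hδ_odd := odd_of_mem_cosetLeaders hn hδ.1
  grind

theorem IsNthSmallestLeader.two_mul_le_add_one (hn : Odd n) {h δ : ℕ}
    (hδ : IsNthSmallestLeader n h δ) : 2 * h ≤ δ + 1 := by
  have hsub : {a ∈ cosetLeaders n | a ≤ δ} ⊆ (2 * · + 1) '' Set.Iio ((δ + 1) / 2) := by
    rintro a ⟨ha, haδ⟩
    obtain ⟨k, rfl⟩ := odd_of_mem_cosetLeaders hn ha
    exact ⟨k, Set.mem_Iio.mpr (by omega), rfl⟩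
  have hcard : h ≤ (δ + 1) / 2 := by
    calc h = {a ∈ cosetLeaders n | a ≤ δ}.ncard := hδ.2.symm
      _ ≤ ((2 * · + 1) '' Set.Iio ((δ + 1) / 2)).ncard :=
        Set.ncard_le_ncard hsub ((Set.finite_Iio _).image _)
      _ ≤ (Set.Iio ((δ + 1) / 2)).ncard := Set.ncard_image_le (Set.finite_Iio _)
      _ = (δ + 1) / 2 := by rw [Set.ncard_eq_toFinset_card', Set.toFinset_Iio, Nat.card_Iio]
  omega

end CosetLeaders

section MinimalPolynomials

variable {F K : Type*} [Field F] [Field K] [Algebra F K]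

theorem isCoprime_minpoly {x y : K} (hx : IsIntegral F x) (hy : IsIntegral F y)
    (hxy : minpoly F x ≠ minpoly F y) : IsCoprime (minpoly F x) (minpoly F y) := by
  have hirr := minpoly.irreducible hx
  rw [hirr.coprime_iff_not_dvd]
  exact fun hdvd ↦ hxy <| eq_of_monic_of_associated (minpoly.monic hx) (minpoly.monic hy) <|
    hirr.associated_of_dvd (minpoly.irreducible hy) hdvd

theorem natDegree_minpoly_of_prime_finrank (hprime : (Module.finrank F K).Prime) {x : K}
    (hx : x ∉ (algebraMap F K).range) : (minpoly F x).natDegree = Module.finrank F K := by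
  have : FiniteDimensional F K := FiniteDimensional.of_finrank_pos hprime.pos
  have hdvd := minpoly.degree_dvd (Algebra.IsIntegral.isIntegral (R := F) x)
  exact ((Nat.dvd_prime hprime).mp hdvd).resolve_left (mt minpoly.natDegree_eq_one_iff.mp hx)

variable [Fintype F]

theorem minpoly_pow_card_pow [Algebra.IsAlgebraic F K] (x : K) (i : ℕ) :
    minpoly F (x ^ Fintype.card F ^ i) = minpoly F x := by
  have := minpoly.algEquiv_eq (FiniteField.frobeniusAlgEquivOfAlgebraic F K ^ i) x
  rwa [AlgEquiv.coe_pow, FiniteField.coe_frobeniusAlgEquivOfAlgebraic_iterate] at this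

theorem exists_eq_pow_card_pow_of_minpoly_eq [Finite K] {x y : K}
    (hxy : minpoly F x = minpoly F y) : ∃ i, x = y ^ Fintype.card F ^ i := by
  obtain ⟨σ, rfl⟩ := (isConjRoot_iff_exists_algEquiv (K := F)).mp hxy
  obtain ⟨i, rfl⟩ := (FiniteField.bijective_frobeniusAlgEquivOfAlgebraic_pow F K).2 σ
  refine ⟨i, ?_⟩
  dsimp only
  rw [AlgEquiv.coe_pow, FiniteField.coe_frobeniusAlgEquivOfAlgebraic_iterate]

end MinimalPolynomials

section BCHGenerator

variable {F K : Type*} [Field F] [NormalizedGCDMonoid F[X]] [Field K] [Algebra F K]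

/-- The generator polynomial of the narrow-sense BCH code with designed distance `d + 1`, i.e. of
`C_{(q, n, d + 1, 1)}` where `n` is the order of `β`. -/
noncomputable def bchGenerator (F : Type*) {K : Type*} [Field F] [NormalizedGCDMonoid F[X]]
    [Field K] [Algebra F K] (β : K) (d : ℕ) : F[X] :=
  (Finset.Icc 1 d).lcm fun j ↦ minpoly F (β ^ j)

theorem minpoly_pow_dvd_bchGenerator (β : K) {d j : ℕ} (hj : j ∈ Finset.Icc 1 d) :
    minpoly F (β ^ j) ∣ bchGenerator F β d :=
  Finset.dvd_lcm (f := fun j ↦ minpoly F (β ^ j)) hj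

theorem aeval_bchGenerator_eq_zero (β : K) {d j : ℕ} (hj : j ∈ Finset.Icc 1 d) :
    aeval (β ^ j) (bchGenerator F β d) = 0 :=
  (minpoly.dvd_iff).mp (minpoly_pow_dvd_bchGenerator β hj)

theorem X_sub_one_mul_bchGenerator_dvd {β : K} {n d : ℕ} (hβ : IsPrimitiveRoot β n)
    (hd : d < n) : (X - 1) * bchGenerator F β d ∣ X ^ n - 1 := by
  have hint (j : ℕ) : IsIntegral F (β ^ j) := (hβ.isIntegral (Nat.zero_lt_of_lt hd)).tower_top.pow j
  have hcop : IsCoprime (X - 1) (bchGenerator F β d) := by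
    refine (IsCoprime.prod_right fun j hj ↦ ?_).of_isCoprime_of_dvd_right
      (Finset.lcm_dvd_prod (Finset.Icc 1 d) fun j ↦ minpoly F (β ^ j))
    obtain ⟨hj1, hjd⟩ := Finset.mem_Icc.mp hj
    have hone : minpoly F (1 : K) = X - 1 := minpoly.one F K
    rw [← hone]
    refine isCoprime_minpoly isIntegral_one (hint j) fun heq ↦ ?_
    have hroot := minpoly.aeval F (β ^ j)
    rw [← heq, hone, map_sub, aeval_X, map_one, sub_eq_zero] at hroot
    exact hβ.pow_ne_one_of_pos_of_lt (by omega) (by omega) hroot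
  refine hcop.mul_dvd (sub_one_dvd_pow_sub_one X n) (Finset.lcm_dvd fun j _ ↦ minpoly.dvd F _ ?_)
  simp [pow_right_comm, hβ.pow_eq_one]

end BCHGenerator

section BinaryBCH

variable {K : Type*} [Field K] [Algebra (ZMod 2) K] {β : K} {n : ℕ}

theorem odd_of_isPrimitiveRoot [NeZero n] (hβ : IsPrimitiveRoot β n) : Odd n := by
  have : CharP K 2 := charP_of_injective_algebraMap (algebraMap (ZMod 2) K).injective 2
  have : NeZero (n : K) := hβ.neZero'
  rw [← Nat.not_even_iff_odd, even_iff_two_dvd, ← CharP.cast_eq_zero_iff K 2]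
  exact NeZero.ne _

theorem natDegree_minpoly_of_prime_finrank_of_ne
    (hprime : (Module.finrank (ZMod 2) K).Prime) {x : K} (hx0 : x ≠ 0) (hx1 : x ≠ 1) :
    (minpoly (ZMod 2) x).natDegree = Module.finrank (ZMod 2) K := by
  refine natDegree_minpoly_of_prime_finrank hprime ?_
  rintro ⟨a, rfl⟩
  fin_cases a
  · exact hx0 (map_zero _)
  · exact hx1 (map_one _)

variable [Finite K]

theorem minpoly_pow_mul_two_pow_mod (hβ : β ^ n = 1) (j i : ℕ) :
    minpoly (ZMod 2) (β ^ (j * 2 ^ i % n)) = minpoly (ZMod 2) (β ^ j) := by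
  rw [← pow_eq_pow_mod _ hβ, pow_mul]
  simpa only [ZMod.card] using minpoly_pow_card_pow (F := ZMod 2) (β ^ j) i

theorem injOn_minpoly_pow_cosetLeaders (hβ : IsPrimitiveRoot β n) :
    Set.InjOn (fun a ↦ minpoly (ZMod 2) (β ^ a)) (cosetLeaders n) := by
  have le_of_minpoly_eq : ∀ a ∈ cosetLeaders n, ∀ b ∈ cosetLeaders n,
      minpoly (ZMod 2) (β ^ a) = minpoly (ZMod 2) (β ^ b) → b ≤ a := by
    intro a ha b hb hab
    obtain ⟨i, hi⟩ := exists_eq_pow_card_pow_of_minpoly_eq hab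
    rw [ZMod.card, ← pow_mul, pow_eq_pow_mod (b * 2 ^ i) hβ.pow_eq_one] at hi
    rw [hβ.pow_inj ha.2.1 (Nat.mod_lt _ (Nat.zero_lt_of_lt ha.2.1)) hi]
    exact hb.2.2 i
  exact fun a ha b hb hab ↦
    le_antisymm (le_of_minpoly_eq b hb a ha hab.symm) (le_of_minpoly_eq a ha b hb hab)

open Classical in
theorem associated_bchGenerator_prod (hβ : IsPrimitiveRoot β n) {d : ℕ} (hd : d < n) :
    Associated (bchGenerator (ZMod 2) β d)
      (∏ a ∈ Finset.Icc 1 d with a ∈ cosetLeaders n, minpoly (ZMod 2) (β ^ a)) := by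
  have : NeZero n := ⟨Nat.ne_zero_of_lt hd⟩
  refine associated_of_dvd_dvd (Finset.lcm_dvd fun j hj ↦ ?_)
    (Finset.prod_dvd_of_coprime (fun a ha b hb hab ↦ ?_) fun a ha ↦ ?_)
  · obtain ⟨hj1, hjd⟩ := Finset.mem_Icc.mp hj
    obtain ⟨_, ha, haj, i, rfl⟩ := exists_mem_cosetLeaders_eq_mul_two_pow_mod
      (odd_of_isPrimitiveRoot hβ) hj1 (hjd.trans_lt hd)
    rw [← minpoly_pow_mul_two_pow_mod hβ.pow_eq_one j i]
    exact Finset.dvd_prod_of_mem (fun a ↦ minpoly (ZMod 2) (β ^ a)) <|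
      Finset.mem_filter.mpr ⟨Finset.mem_Icc.mpr ⟨ha.1, haj.trans hjd⟩, ha⟩
  · exact isCoprime_minpoly (.of_finite _ _) (.of_finite _ _) <|
      (injOn_minpoly_pow_cosetLeaders hβ).ne (Finset.mem_filter.mp ha).2
        (Finset.mem_filter.mp hb).2 hab
  · exact minpoly_pow_dvd_bchGenerator β (Finset.mem_filter.mp ha).1

theorem natDegree_bchGenerator (hprime : (Module.finrank (ZMod 2) K).Prime)
    (hβ : IsPrimitiveRoot β n) {d : ℕ} (hd : d < n) :
    (bchGenerator (ZMod 2) β d).natDegree =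
      {a ∈ cosetLeaders n | a ≤ d}.ncard * Module.finrank (ZMod 2) K := by
  classical
  have hcoe : {a ∈ cosetLeaders n | a ≤ d} =
      ({a ∈ Finset.Icc 1 d | a ∈ cosetLeaders n} : Finset ℕ) := by
    ext a
    rw [Finset.mem_coe, Finset.mem_filter, Finset.mem_Icc]
    exact ⟨fun ⟨ha, had⟩ ↦ ⟨⟨ha.1, had⟩, ha⟩, fun ⟨⟨_, had⟩, ha⟩ ↦ ⟨ha, had⟩⟩
  have hdeg : ∀ a ∈ cosetLeaders n,
      (minpoly (ZMod 2) (β ^ a)).natDegree = Module.finrank (ZMod 2) K := fun a ha ↦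
    natDegree_minpoly_of_prime_finrank_of_ne hprime
      (pow_ne_zero a (hβ.ne_zero (Nat.ne_zero_of_lt hd)))
      (hβ.pow_ne_one_of_pos_of_lt ha.1.ne' ha.2.1)
  rw [natDegree_eq_of_degree_eq
      (degree_eq_degree_of_associated (associated_bchGenerator_prod hβ hd)),
    natDegree_prod_of_monic _ _ fun a _ ↦ minpoly.monic (.of_finite _ _),
    Finset.sum_congr rfl fun a ha ↦ hdeg a (Finset.mem_filter.mp ha).2, Finset.sum_const,
    smul_eq_mul, hcoe, Set.ncard_coe_finset]

end BinaryBCH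

/-- for a prime `m ≥ 3`, `n = 2^m - 1`, `h = (2^{m-1} - 1)/m`, `δ_h` the
`h`-th smallest nonzero `2`-cyclotomic coset leader mod `n`, and
`g = lcm(m_β, m_{β²}, …, m_{β^{δ_h + 1}})` the generator polynomial of the BCH code
`C_{(2,n,δ_h+2,1)}` (with `β` a primitive element of `F_{2^m}`), the repeated-root
binary cyclic code of length `2n` with generator polynomial `(x-1) g(x)^2` has
dimension `n` and minimum distance `d ≥ δ_h + 3 ≥ (n - 1 + 2m)/m`. -/
theorem statement18 {K : Type*} [Field K] [Fintype K] [Algebra (ZMod 2) K]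
    (m : ℕ) (hm : 3 ≤ m) (hmp : m.Prime) (hK : Fintype.card K = 2 ^ m)
    (n : ℕ) (hn : n = 2 ^ m - 1)
    (h : ℕ) (hh : m * h = 2 ^ (m - 1) - 1)
    (β : K) (hβ : IsPrimitiveRoot β (2 ^ m - 1))
    (δ : ℕ) (hδ : IsNthSmallestLeader n h δ)
    (g : Polynomial (ZMod 2))
    (hg : g = (Finset.Icc 1 (δ + 1)).lcm fun j => minpoly (ZMod 2) (β ^ j)) :
    Module.finrank (ZMod 2) (cyclicCode (ZMod 2) (2 * n) ((X - 1) * g ^ 2)) = n ∧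
    (n - 1 + 2 * m) / m ≤ δ + 3 ∧
    δ + 3 ≤ minDist (cyclicCode (ZMod 2) (2 * n) ((X - 1) * g ^ 2)) := by
  rw [← hn] at hβ
  change g = bchGenerator (ZMod 2) β (δ + 1) at hg
  have hn_eq : n = 2 * (m * h) + 1 := by
    have := mul_pow_sub_one hmp.ne_zero 2
    have := Nat.one_le_two_pow (n := m - 1)
    omega
  have hn_odd : Odd n := ⟨m * h, hn_eq⟩
  have hδn : δ + 1 < n := add_one_lt_of_mem_cosetLeaders hn_odd hδ.1
  have hrank : Module.finrank (ZMod 2) K = m := Nat.pow_right_injective le_rfl <| by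
    simpa only [hK, ZMod.card] using (Module.card_eq_pow_finrank (K := ZMod 2) (V := K)).symm
  have hdvd : (X - 1) * g ∣ X ^ n - 1 := hg ▸ X_sub_one_mul_bchGenerator_dvd hβ hδn
  have hdeg : g.natDegree = h * m := by
    rw [hg, natDegree_bchGenerator (hrank.symm ▸ hmp) hβ hδn, hδ.ncard_le_add_one hn_odd, hrank]
  refine ⟨?_, ?_, ?_⟩
  · have hdim := finrank_cyclicCode_X_sub_one_mul_pow_card (by omega) hdvd
    rw [ZMod.card, hdeg] at hdim
    grind
  · have hle := hδ.two_mul_le_add_one hn_odd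
    rw [show n - 1 + 2 * m = m * (2 * h + 2) by grind, Nat.mul_div_cancel_left _ hmp.pos]
    omega
  · have hroots : ∀ j ∈ Finset.Icc 1 (δ + 1), aeval (β ^ j) g = 0 := fun _ hj ↦
      hg ▸ aeval_bchGenerator_eq_zero β hj
    simpa only [ZMod.card] using add_two_le_minDist_cyclicCode (by omega) hβ hroots hdvd
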